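/- Let n ≥ 1 and m ≥ 1 be integers, let R₁, …, R_m be nonnegative integers with R₁ + ⋯ + R_m ≤ n − m, set γ_v = n − v + 1 − Σ_{u=1}^{v−1} R_u for 1 ≤ v ≤ m + 1, and let θ > 0, T > 0 and an integer i with 1 ≤ i ≤ m. Let μ be the measure on ℝ^m whose density with respect to Lebesgue measure is z ↦ 1_{0 < z₁ < ⋯ < z_m < T} · exp(−(1/θ) Σ_{s=1}^{m} z_s(1 + R_s)), and let g(z) = (Σ_{s=1}^{m} z_s(1 + R_s))/i. Then the pushforward measure g_*μ has Lebesgue density x ↦ θ^m Σ_{v=0}^{m} [ (−1)^v e^{−(T/θ)(γ_{m−v+1} − γ_{m+1})} / ( (∏_{j=1}^{v} (γ_{m−v+1} − γ_{m−v+j+1})) (∏_{j=1}^{m−v} (γ_j − γ_{m−v+1})) ) ] · f_G(x; T(γ_{m−v+1} − γ_{m+1})/i, m, i/θ). (This is the conditional density of the MLE θ̂₁ = W/D₁ given Z_{k:m:n} < Z_{m:m:n} < T and D₁ = i, up to the common normalizing constant.) -/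

import Mathlib

open MeasureTheory

/-- `γ_v = n − v + 1 − Σ_{u=1}^{v−1} R_u`, the number of surviving units at the time of the
`v`-th failure in a progressive censoring scheme with removals `R 1, R 2, …`. -/
noncomputable def gam (n : ℕ) (R : ℕ → ℕ) (v : ℕ) : ℝ :=
  (n : ℝ) - v + 1 - ∑ u ∈ Finset.Icc 1 (v - 1), (R u : ℝ)

/-- `fG x a b c`: density at `x` of the shifted Gamma distribution with shift `a`,
shape `b` and rate `c`, i.e. `(c^b/Γ(b)) (x − a)^{b−1} e^{−c(x−a)}` for `x > a`. -/
noncomputable def fG (x a b c : ℝ) : ℝ :=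
  if a < x then c ^ b / Real.Gamma b * (x - a) ^ (b - 1) * Real.exp (-c * (x - a)) else 0

noncomputable def ppw (k : ℕ) (x : ℝ) : ℝ := if 0 < x then x ^ k else 0

lemma ppw_meas (k : ℕ) : Measurable (ppw k) :=
  Measurable.ite measurableSet_Ioi (by fun_prop) measurable_const

lemma ppw_mono (k : ℕ) : Monotone (ppw k) := by
  intro x y h
  unfold ppw
  split_ifs with h1 h2 h2
  · exact pow_le_pow_left₀ h1.le h k
  · linarith
  · positivity
  · exact le_rfl

lemma ppw_succ (k : ℕ) (x : ℝ) : ppw (k+1) x = (max x 0) ^ (k+1) := by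
  unfold ppw
  split_ifs with h
  · rw [max_eq_left h.le]
  · rw [max_eq_right (not_lt.1 h)]; simp

lemma ppw_cont (k : ℕ) : Continuous (ppw (k+1)) := by
  rw [funext (ppw_succ k)]
  fun_prop

lemma ppw_deriv (k : ℕ) {x : ℝ} (hx : x ≠ 0) :
    HasDerivAt (ppw (k+1)) ((k+1) * ppw k x) x := by
  rcases lt_or_gt_of_ne hx with h | h
  · have : ppw k x = 0 := by simp [ppw, not_lt.2 h.le]
    rw [this, mul_zero]
    refine (hasDerivAt_const x (0:ℝ)).congr_of_eventuallyEq ?_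
    filter_upwards [Iio_mem_nhds h] with y hy
    simp [ppw, not_lt.2 (le_of_lt (Set.mem_Iio.1 hy))]
  · have : ppw k x = x ^ k := by simp [ppw, h]
    rw [this]
    have := hasDerivAt_pow (k+1) x
    rw [Nat.add_sub_cancel] at this
    push_cast at this
    refine this.congr_of_eventuallyEq ?_
    filter_upwards [Ioi_mem_nhds h] with y hy
    simp [ppw, Set.mem_Ioi.1 hy]

lemma ppw_intble (k : ℕ) (w B T : ℝ) (hB : 0 < B) :
    IntervalIntegrable (fun t => ppw k (w - t * B)) volume 0 T := by
  apply Antitone.intervalIntegrable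
  intro x y h
  apply ppw_mono
  nlinarith

lemma ppw_integral (k : ℕ) (w B T : ℝ) (hB : 0 < B) :
    ∫ t in (0:ℝ)..T, ppw k (w - t * B) =
      (ppw (k+1) w - ppw (k+1) (w - T * B)) / ((k+1) * B) := by
  have hk : (0:ℝ) < k + 1 := by positivity
  rw [integral_eq_of_hasDerivAt_off_countable
    (fun t => - ppw (k+1) (w - t * B) / ((k+1) * B)) _ (s := {w / B})
    (Set.countable_singleton _) ?_ ?_ (ppw_intble k w B T hB)]
  · simp only [zero_mul, sub_zero]; ring
  · have := ppw_cont k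
    apply Continuous.continuousOn
    fun_prop
  · intro x hx
    have hne : w - x * B ≠ 0 := by
      intro h
      apply hx.2
      simp only [Set.mem_singleton_iff]
      field_simp
      linarith
    have h1 : HasDerivAt (fun t : ℝ => w - t * B) (-B) x := by
      simpa using ((hasDerivAt_id x).mul_const B).const_sub w
    have h2 := ((ppw_deriv k hne).comp x h1).neg.div_const ((k+1) * B)
    refine h2.congr_deriv ?_
    generalize ppw k (w - x * B) = c
    field_simp

noncomputable def SS (a : ℕ → ℝ) (k : ℕ) : ℝ := ∑ s ∈ Finset.range k, a s

lemma SS_mono {a : ℕ → ℝ} (ha : ∀ s, 0 < a s) : StrictMono (SS a) :=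
  strictMono_nat_of_lt_succ fun k => by simp [SS, Finset.sum_range_succ, ha]

noncomputable def nw (a : ℕ → ℝ) (m j : ℕ) : ℝ :=
  Lagrange.nodalWeight (Finset.range (m+1)) (SS a) j

lemma nw_succ (a : ℕ → ℝ) {m j : ℕ} (hj : j ≤ m) :
    nw a (m+1) j = nw a m j * (SS a j - SS a (m+1))⁻¹ := by
  unfold nw Lagrange.nodalWeight
  rw [Finset.range_add_one (n := m+1), Finset.erase_insert_of_ne (by omega),
    Finset.prod_insert (by simp), mul_comm]

lemma nw_last {a : ℕ → ℝ} (ha : ∀ s, 0 < a s) (m : ℕ) :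
    nw a (m+1) (m+1) = ∑ j ∈ Finset.range (m+1), nw a m j * (SS a (m+1) - SS a j)⁻¹ := by
  have hinj := (SS_mono ha).injective
  have hx : ∀ i ∈ Finset.range (m+1), SS a (m+1) ≠ SS a i := by
    intro i hi h
    have := hinj h
    simp at hi; omega
  have h := Lagrange.eval_interpolate_not_at_node (s := Finset.range (m+1)) (v := SS a) 1 hx
  rw [Lagrange.interpolate_one hinj.injOn (by simp), Lagrange.eval_nodal] at h
  simp only [Polynomial.eval_one, Pi.one_apply, mul_one] at h
  unfold nw
  rw [eq_comm, eq_inv_of_mul_eq_one_right h.symm, Lagrange.nodalWeight,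
    Finset.range_add_one (n := m+1), Finset.erase_insert (by simp), Finset.prod_inv_distrib]

noncomputable def pd (a : ℕ → ℝ) (k : ℕ) (T w : ℝ) : ℝ :=
  (1 / (k.factorial : ℝ)) * ∑ j ∈ Finset.range (k+2), nw a (k+1) j *
    ppw k (w - T * (SS a (k+1) - SS a j))

lemma pd_meas (a : ℕ → ℝ) (k : ℕ) : Measurable (fun q : ℝ × ℝ => pd a k q.1 q.2) := by
  unfold pd
  apply Measurable.const_mul
  apply Finset.measurable_sum
  intro j _
  apply Measurable.const_mul
  exact (ppw_meas k).comp (by fun_prop)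

lemma pd_arg (a : ℕ → ℝ) (k j : ℕ) (t w : ℝ) :
    (w - t * a (k+1)) - t * (SS a (k+1) - SS a j) = w - t * (SS a (k+2) - SS a j) := by
  simp only [SS, Finset.sum_range_succ]; ring

lemma pd_intble {a : ℕ → ℝ} (ha : ∀ s, 0 < a s) (k : ℕ) (T w : ℝ) :
    IntervalIntegrable (fun t => pd a k t (w - t * a (k+1))) volume 0 T := by
  unfold pd
  apply IntervalIntegrable.const_mul
  have : (fun t => ∑ j ∈ Finset.range (k+2), nw a (k+1) j *
    ppw k (w - t * a (k+1) - t * (SS a (k+1) - SS a j))) = ∑ j ∈ Finset.range (k+2), fun t => nw a (k+1) j *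
    ppw k (w - t * a (k+1) - t * (SS a (k+1) - SS a j)) := by
    ext t; simp
  rw [this]
  apply IntervalIntegrable.sum
  intro j hj
  apply IntervalIntegrable.const_mul
  simp_rw [pd_arg]
  exact ppw_intble k w _ T (sub_pos.2 (SS_mono ha (by simpa using hj)))

lemma pd_succ {a : ℕ → ℝ} (ha : ∀ s, 0 < a s) (k : ℕ) (T w : ℝ) :
    ∫ t in (0:ℝ)..T, pd a k t (w - t * a (k+1)) = pd a (k+1) T w := by
  have hpos : ∀ j ∈ Finset.range (k+2), 0 < SS a (k+2) - SS a j := fun j hj =>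
    sub_pos.2 (SS_mono ha (by simpa using hj))
  unfold pd
  rw [intervalIntegral.integral_const_mul, intervalIntegral.integral_finsetSum]
  · simp_rw [pd_arg, intervalIntegral.integral_const_mul]
    rw [Finset.sum_range_succ _ (k+2), nw_last ha, Finset.sum_mul, ← Finset.sum_add_distrib,
      Finset.mul_sum, Finset.mul_sum]
    refine Finset.sum_congr rfl fun j hj => ?_
    have hj' := hpos j hj
    rw [ppw_integral k w _ T hj', nw_succ a (m := k+1) (by simp at hj; omega)]
    have e : SS a j - SS a (k+1+1) = -(SS a (k+2) - SS a j) := by ring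
    rw [e, Nat.factorial_succ]
    have hk : (k:ℝ) + 1 ≠ 0 := by positivity
    have hf : (k.factorial : ℝ) ≠ 0 := by positivity
    push_cast
    simp only [show k + 1 + 1 = k + 2 from rfl, sub_self, mul_zero, sub_zero]
    generalize SS a (k+2) - SS a j = B at *
    have := hj'.ne'
    field_simp
    ring
  · intro j hj
    apply IntervalIntegrable.const_mul
    simp_rw [pd_arg]
    exact ppw_intble k w _ T (hpos j hj)

def sx (m : ℕ) (T : ℝ) : Set (Fin m → ℝ) := {z | StrictMono z ∧ ∀ h, 0 < z h ∧ z h < T}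

lemma sx_meas' (m : ℕ) : MeasurableSet {q : ℝ × (Fin m → ℝ) | q.2 ∈ sx m q.1} := by
  have : {q : ℝ × (Fin m → ℝ) | q.2 ∈ sx m q.1} =
    (⋂ i : Fin m, ⋂ j : Fin m, ⋂ _ : i < j, {q | q.2 i < q.2 j}) ∩
      ⋂ h : Fin m, ({q | 0 < q.2 h} ∩ {q | q.2 h < q.1}) := by
    ext q
    simp [sx, StrictMono]
  rw [this]
  refine MeasurableSet.inter ?_ ?_
  · refine MeasurableSet.iInter fun i => MeasurableSet.iInter fun j => MeasurableSet.iInter fun _ => ?_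
    exact measurableSet_lt (by fun_prop) (by fun_prop)
  · refine MeasurableSet.iInter fun i => MeasurableSet.inter ?_ ?_
    · exact measurableSet_lt (by fun_prop) (by fun_prop)
    · exact measurableSet_lt (by fun_prop) (by fun_prop)

lemma sx_meas (m : ℕ) (T : ℝ) : MeasurableSet (sx m T) :=
  (sx_meas' m).preimage (f := fun z => (T, z)) (by fun_prop)

lemma snoc_mem (m : ℕ) (T t : ℝ) (z : Fin m → ℝ) :
    (Fin.snoc z t : Fin (m+1) → ℝ) ∈ sx (m+1) T ↔ t ∈ Set.Ioo 0 T ∧ z ∈ sx m t := by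
  constructor
  · rintro ⟨h1, h2⟩
    refine ⟨by simpa using h2 (Fin.last m), ?_, fun h => ⟨?_, ?_⟩⟩
    · intro i j hij
      simpa using h1 (Fin.castSucc_lt_castSucc_iff.2 hij)
    · simpa using (h2 h.castSucc).1
    · simpa using h1 (Fin.castSucc_lt_last h)
  · rintro ⟨⟨h1, h2⟩, h3, h4⟩
    refine ⟨?_, fun h => ?_⟩
    · intro i j
      induction i using Fin.lastCases with
      | last => intro h; exact absurd h (not_lt.2 (Fin.le_last j))
      | cast i =>
        induction j using Fin.lastCases with
        | last => intro _; simpa using (h4 i).2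
        | cast j => intro h; simpa using h3 (Fin.castSucc_lt_castSucc_iff.1 h)
    · induction h using Fin.lastCases with
      | last => simpa using ⟨h1, h2⟩
      | cast i => simpa using ⟨(h4 i).1, (h4 i).2.trans h2⟩

lemma lint_scale (c : ℝ) (hc : 0 < c) (f : ℝ → ENNReal) (hf : Measurable f) :
    ∫⁻ x, f x = ENNReal.ofReal c * ∫⁻ x, f (c * x) := by
  conv_lhs => rw [← Real.smul_map_volume_mul_left hc.ne']
  rw [lintegral_smul_measure, lintegral_map hf (by fun_prop), abs_of_pos hc, smul_eq_mul]

lemma pd_zero {a : ℕ → ℝ} (ha : ∀ s, 0 < a s) (T w : ℝ) (hT : 0 < T) :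
    pd a 0 T w = (1 / a 0) * (Set.indicator (Set.Ioc 0 (T * a 0)) 1 w) := by
  have h1 := nw_last ha 0
  have h2 := nw_succ a (le_refl 0)
  have h3 : nw a 0 0 = 1 := by simp [nw, Lagrange.nodalWeight]
  simp [SS, h3] at h1 h2
  have := mul_pos hT (ha 0)
  simp only [pd, Finset.sum_range_succ, Finset.range_zero, Finset.sum_empty, zero_add]
  rw [h1, h2]
  simp [SS, ppw, Set.indicator]
  split_ifs <;> first | (exfalso; grind) | simp

lemma joint_meas (a : ℕ → ℝ) (k : ℕ) (h : ℝ → ENNReal) (hh : Measurable h) :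
    Measurable (Function.uncurry fun t w : ℝ =>
      ENNReal.ofReal (pd a k t (w - t * a (k+1))) * h w) := by
  have h1 : Measurable fun q : ℝ × ℝ => pd a k q.1 (q.2 - q.1 * a (k+1)) := by
    have h0 : Measurable fun q : ℝ × ℝ => (q.1, q.2 - q.1 * a (k+1)) := by fun_prop
    have h3 := (pd_meas a k).comp h0
    simpa only [Function.comp_def] using h3
  have h2 : Measurable fun q : ℝ × ℝ => h q.2 := hh.comp measurable_snd
  exact h1.ennreal_ofReal.mul h2

lemma main_ind {a : ℕ → ℝ} (ha : ∀ s, 0 < a s) (k : ℕ) : ∀ T : ℝ, 0 < T →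
    (∀ w, 0 ≤ pd a k T w) ∧ ∀ h : ℝ → ENNReal, Measurable h →
      ∫⁻ z : Fin (k+1) → ℝ, (sx (k+1) T).indicator (fun z => h (∑ s, z s * a s)) z =
        ∫⁻ w, ENNReal.ofReal (pd a k T w) * h w := by
  induction k with
  | zero =>
    intro T hT
    have h0 := ha 0
    refine ⟨fun w => ?_, fun h hh => ?_⟩
    · rw [pd_zero ha T w hT]
      refine mul_nonneg (by positivity) (Set.indicator_nonneg (by simp) _)
    · refine (((volume_preserving_funUnique (Fin 1) ℝ).symm _).lintegral_comp_emb
        (MeasurableEquiv.measurableEmbedding _) _).symm.trans ?_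
      rw [lint_scale (a 0) h0 (fun w => ENNReal.ofReal (pd a 0 T w) * h w)
        (((pd_meas a 0).comp (by fun_prop : Measurable fun w : ℝ => (T, w))).ennreal_ofReal.mul hh),
        ← lintegral_const_mul']
      swap
      · exact ENNReal.ofReal_ne_top
      refine lintegral_congr_ae ?_
      have hne : ∀ᵐ x : ℝ, x ≠ T := by simp [ae_iff]
      filter_upwards [hne] with x hx
      rw [← mul_assoc, ← ENNReal.ofReal_mul h0.le, pd_zero ha T _ hT]
      by_cases hm : x ∈ Set.Ioo 0 T
      · rw [Set.indicator_of_mem, Set.indicator_of_mem]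
        · simp [h0.ne', MeasurableEquiv.funUnique, mul_comm]
        · exact ⟨mul_pos h0 hm.1, by nlinarith [hm.2]⟩
        · refine ⟨fun x y hxy => absurd hxy (by have := x.2; have := y.2; rw [Fin.lt_def]; omega), fun _ => ?_⟩
          simpa [MeasurableEquiv.funUnique] using hm
      · rw [Set.indicator_of_notMem, Set.indicator_of_notMem]
        · simp
        · intro hc
          apply hm
          have h1 : 0 < x := by
            by_contra h; have := hc.1; nlinarith
          have h2 : x ≤ T := by
            by_contra h; have := hc.2; nlinarith
          exact ⟨h1, lt_of_le_of_ne h2 hx⟩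
        · intro hc
          apply hm
          simpa [MeasurableEquiv.funUnique] using hc.2 0
  | succ k ih =>
    intro T hT
    have hnn : ∀ w, ∀ t ∈ Set.Ioo 0 T, 0 ≤ pd a k t (w - t * a (k+1)) :=
      fun w t ht => (ih t ht.1).1 _
    have hkey : ∀ w, ∫⁻ t in Set.Ioo 0 T, ENNReal.ofReal (pd a k t (w - t * a (k+1))) =
        ENNReal.ofReal (pd a (k+1) T w) := by
      intro w
      rw [← pd_succ ha, intervalIntegral.integral_of_le hT.le, integral_Ioc_eq_integral_Ioo,
        ofReal_integral_eq_lintegral_ofReal]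
      · exact ((intervalIntegrable_iff_integrableOn_Ioo_of_le hT.le).1 (pd_intble ha k T w))
      · exact (ae_restrict_iff' measurableSet_Ioo).2 (Filter.Eventually.of_forall (hnn w))
    refine ⟨fun w => ?_, fun h hh => ?_⟩
    · rw [← pd_succ ha, intervalIntegral.integral_of_le hT.le, integral_Ioc_eq_integral_Ioo]
      exact setIntegral_nonneg measurableSet_Ioo (hnn w)
    · rw [← ((volume_preserving_piFinSuccAbove (fun _ : Fin (k+2) => ℝ) (Fin.last (k+1))).symm
        _).lintegral_comp_emb (MeasurableEquiv.measurableEmbedding _)]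
      have hmeas : Measurable ((sx (k+1+1) T).indicator
          (fun z => h (∑ s : Fin (k+1+1), z s * a s))) :=
        (hh.comp (by fun_prop)).indicator (sx_meas _ _)
      rw [Measure.volume_eq_prod, lintegral_prod _
        (by exact (hmeas.comp (MeasurableEquiv.measurable _)).aemeasurable)]
      have e1 : ∀ (t : ℝ) (z : Fin (k+1) → ℝ), (sx (k+1+1) T).indicator
          (fun z => h (∑ s : Fin (k+1+1), z s * a s))
          ((MeasurableEquiv.piFinSuccAbove (fun _ : Fin (k+2) => ℝ) (Fin.last (k+1))).symm (t, z))
          = (Set.Ioo 0 T).indicator (fun t => (sx (k+1) t).indicator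
            (fun z => h (∑ s : Fin (k+1), z s * a s + t * a (k+1))) z) t := by
        intro t z
        have : (MeasurableEquiv.piFinSuccAbove (fun _ : Fin (k+2) => ℝ) (Fin.last (k+1))).symm (t, z)
          = Fin.snoc z t := by
          rw [← Fin.insertNth_last']; rfl
        rw [this]
        have hm := snoc_mem (k+1) T t z
        by_cases h1 : t ∈ Set.Ioo 0 T
        · by_cases h2 : z ∈ sx (k+1) t
          · rw [Set.indicator_of_mem (hm.2 ⟨h1, h2⟩), Set.indicator_of_mem h1,
              Set.indicator_of_mem h2, Fin.sum_univ_castSucc]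
            simp
          · rw [Set.indicator_of_notMem (fun hc => h2 (hm.1 hc).2), Set.indicator_of_mem h1,
              Set.indicator_of_notMem h2]
        · rw [Set.indicator_of_notMem (fun hc => h1 (hm.1 hc).1), Set.indicator_of_notMem h1]
      have e2 : ∀ t : ℝ, ∫⁻ z : Fin (k+1) → ℝ, (sx (k+1+1) T).indicator
          (fun z => h (∑ s : Fin (k+1+1), z s * a s))
          ((MeasurableEquiv.piFinSuccAbove (fun _ : Fin (k+2) => ℝ) (Fin.last (k+1))).symm (t, z))
          = (Set.Ioo 0 T).indicator (fun t => ∫⁻ w,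
            ENNReal.ofReal (pd a k t (w - t * a (k+1))) * h w) t := by
        intro t
        simp_rw [e1]
        by_cases h1 : t ∈ Set.Ioo 0 T
        · simp only [Set.indicator_of_mem h1]
          rw [(ih t h1.1).2 (fun w => h (w + t * a (k+1))) (hh.comp (by fun_prop)),
            ← lintegral_sub_right_eq_self _ (t * a (k+1))]
          simp
        · simp only [Set.indicator_of_notMem h1]
          simp
      refine (lintegral_congr e2).trans ?_
      rw [lintegral_indicator measurableSet_Ioo, lintegral_lintegral_swap]
      · refine lintegral_congr fun w => ?_
        rw [lintegral_mul_const, hkey]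
        exact ((pd_meas a k).comp
          (by fun_prop : Measurable fun t : ℝ => (t, w - t * a (k+1)))).ennreal_ofReal
      · exact (joint_meas a k h hh).aemeasurable

lemma prod_Icc_shift (f : ℕ → ℝ) (v : ℕ) :
    ∏ j ∈ Finset.Icc 1 v, f j = ∏ j ∈ Finset.range v, f (j+1) := by
  induction v with
  | zero => simp
  | succ v ih => rw [Finset.prod_Icc_succ_top (by omega), ih, Finset.prod_range_succ]

lemma sum_Icc_shift (f : ℕ → ℝ) (v : ℕ) :
    ∑ j ∈ Finset.Icc 1 v, f j = ∑ j ∈ Finset.range v, f (j+1) := by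
  induction v with
  | zero => simp
  | succ v ih => rw [Finset.sum_Icc_succ_top (by omega), ih, Finset.sum_range_succ]

lemma prod_erase_split (f : ℕ → ℝ) (q v : ℕ) :
    ∏ j ∈ (Finset.range (q+v+1)).erase q, f j =
      (∏ j ∈ Finset.range q, f j) * ∏ j ∈ Finset.range v, f (q + (j+1)) := by
  induction v with
  | zero => simp [Finset.range_add_one]
  | succ v ih =>
    rw [← Nat.add_assoc, Finset.range_add_one (n := q+v+1), Finset.erase_insert_of_ne (by omega),
      Finset.prod_insert (by simp), ih, Finset.prod_range_succ, Nat.add_assoc q v 1]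
    ring

lemma gam_eq (n : ℕ) (R : ℕ → ℕ) (j : ℕ) :
    gam n R (j+1) = n - SS (fun s => 1 + (R (s+1) : ℝ)) j := by
  simp only [gam, SS, Nat.add_sub_cancel, sum_Icc_shift, Finset.sum_add_distrib]
  simp
  ring

lemma nw_eq (n : ℕ) (R : ℕ → ℕ) (q v : ℕ) :
    nw (fun s => 1 + (R (s+1) : ℝ)) (q+v) q = (-1)^v /
      ((∏ j ∈ Finset.Icc 1 v, (gam n R (q + 1) - gam n R (q + j + 1))) *
                  (∏ j ∈ Finset.Icc 1 q, (gam n R j - gam n R (q + 1)))) := by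
  rw [nw, Lagrange.nodalWeight, prod_erase_split, prod_Icc_shift, prod_Icc_shift]
  simp only [gam_eq]
  generalize SS (fun s => 1 + (R (s+1) : ℝ)) = S
  have e1 : ∏ j ∈ Finset.range v, (S q - S (q + (j+1)))⁻¹ =
      (-1)^v * (∏ j ∈ Finset.range v, (n - S q - (n - S (q + (j+1)))))⁻¹ := by
    rw [← Finset.prod_inv_distrib]
    conv_rhs => rw [← Finset.card_range v, ← Finset.prod_const, Finset.card_range]
    rw [← Finset.prod_mul_distrib]
    refine Finset.prod_congr rfl fun j _ => ?_
    rw [show (n - S q - (n - S (q + (j+1)))) = -(S q - S (q+(j+1))) by ring, inv_neg]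
    ring
  have e2 : ∏ j ∈ Finset.range q, (S q - S j)⁻¹ =
      (∏ j ∈ Finset.range q, (n - S j - (n - S q)))⁻¹ := by
    rw [← Finset.prod_inv_distrib]
    refine Finset.prod_congr rfl fun j _ => ?_
    congr 1; ring
  rw [e1, e2, div_eq_mul_inv, mul_inv]
  ring

lemma fG_eq (x A θ : ℝ) (k i : ℕ) (hθ : 0 < θ) (hi : 1 ≤ i) :
    fG x (A / i) ((k+1 : ℕ) : ℝ) (i / θ) =
      i / θ ^ (k+1) / k.factorial * ppw k (i * x - A) * Real.exp (-(i/θ) * x + A / θ) := by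
  have hi' : (0:ℝ) < i := by exact_mod_cast hi
  unfold fG ppw
  have : A / i < x ↔ 0 < i * x - A := by
    rw [div_lt_iff₀ hi', sub_pos, mul_comm]
  simp only [this]
  split_ifs with h
  · have e : x - A / i = (i * x - A) / i := by field_simp
    have e2 : -((i:ℝ)/θ) * (x - A / i) = -(i/θ) * x + A / θ := by field_simp; ring
    rw [e2, e, Real.rpow_natCast]
    push_cast
    rw [Real.Gamma_nat_eq_factorial, add_sub_cancel_right, Real.rpow_natCast, div_pow, div_pow]
    field_simp
    ring
  · simp

lemma final_eq (n : ℕ) (R : ℕ → ℕ) (θ T x : ℝ) (k i : ℕ) (hθ : 0 < θ) (hi : 1 ≤ i) :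
    (i:ℝ) * (pd (fun s => 1 + (R (s+1) : ℝ)) k T (i * x) * Real.exp (-(1/θ) * (i * x))) =
    θ ^ (k+1) * ∑ v ∈ Finset.range (k + 1 + 1),
            (-1 : ℝ) ^ v *
                Real.exp (-(T / θ) * (gam n R (k + 1 - v + 1) - gam n R (k + 1 + 1))) /
                ((∏ j ∈ Finset.Icc 1 v, (gam n R (k + 1 - v + 1) - gam n R (k + 1 - v + j + 1))) *
                  (∏ j ∈ Finset.Icc 1 (k + 1 - v), (gam n R j - gam n R (k + 1 - v + 1)))) *
              fG x (T * (gam n R (k + 1 - v + 1) - gam n R (k + 1 + 1)) / i) (k + 1 : ℕ) (i / θ) := by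
  rw [pd, ← Finset.sum_range_reflect]
  simp only [Finset.mul_sum, Finset.sum_mul]
  refine Finset.sum_congr rfl fun v hv => ?_
  have hv' : v ≤ k + 1 := by simp at hv; omega
  obtain ⟨q, hq⟩ := Nat.exists_eq_add_of_le' hv'
  have hq1 : k + 1 - v = q := by omega
  rw [show k + 2 - 1 - v = q by omega, hq1]
  have hnw := nw_eq n R q v
  rw [← hq] at hnw
  rw [hnw, fG_eq _ _ _ _ _ hθ hi]
  have hA : gam n R (q+1) - gam n R (k+1+1) = SS (fun s => 1 + (R (s+1) : ℝ)) (k+1) -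
      SS (fun s => 1 + (R (s+1) : ℝ)) q := by
    rw [gam_eq, gam_eq]; ring
  rw [hA]
  generalize SS (fun s => 1 + (R (s+1) : ℝ)) (k+1) -
      SS (fun s => 1 + (R (s+1) : ℝ)) q = A
  have hE : Real.exp (-(1/θ) * (i * x)) =
      Real.exp (-(T / θ) * A) * Real.exp (-(i/θ) * x + T * A / θ) := by
    rw [← Real.exp_add]; congr 1; ring
  rw [hE]
  have : θ ^ (k+1) ≠ 0 := by positivity
  have e : (i:ℝ) / θ ^ (k+1) = i * (θ^(k+1))⁻¹ := div_eq_mul_inv _ _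
  rw [e]
  generalize θ ^ (k+1) = t at *
  generalize Real.exp (-(T / θ) * A) = E1
  generalize Real.exp (-(i/θ) * x + T * A / θ) = E2
  generalize ppw k (i * x - T * A) = p
  simp only [div_eq_mul_inv, one_mul]
  rw [show ∀ b c d e f g : ℝ, t * (b * c * d * (e * t⁻¹ * f * g * E2)) =
    (t * t⁻¹) * (b * c * d * (e * f * g * E2)) by intros; ring, mul_inv_cancel₀ this]
  ring

/-- Case `Z_{k:m:n} < Z_{m:m:n} < T`: the pushforward of the (sub-probability) measure with
density `1_{0<z₁<⋯<z_m<T} exp(−(1/θ) Σ z_s(1+R_s))` under `g(z) = (Σ z_s(1+R_s))/i` has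
Lebesgue density
`x ↦ θ^m Σ_{v=0}^{m} (−1)^v e^{−(T/θ)(γ_{m−v+1}−γ_{m+1})} / [⋯] ·
  f_G(x; T(γ_{m−v+1}−γ_{m+1})/i, m, i/θ)`. -/
theorem conditional_density_mle_case_Zm (n m : ℕ) (hn : 1 ≤ n) (hm : 1 ≤ m) (R : ℕ → ℕ)
    (hR : (∑ u ∈ Finset.Icc 1 m, R u) + m ≤ n)
    (θ T : ℝ) (hθ : 0 < θ) (hT : 0 < T)
    (i : ℕ) (hi1 : 1 ≤ i) (him : i ≤ m) :
    Measure.map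
        (fun z : Fin m → ℝ => (∑ h, z h * (1 + (R (h.1 + 1) : ℝ))) / i)
        (volume.withDensity fun z : Fin m → ℝ =>
          ENNReal.ofReal
            (Set.indicator {z : Fin m → ℝ | StrictMono z ∧ ∀ h, 0 < z h ∧ z h < T}
              (fun z => Real.exp (-(1 / θ) * ∑ h, z h * (1 + (R (h.1 + 1) : ℝ)))) z)) =
      volume.withDensity fun x =>
        ENNReal.ofReal
          (θ ^ m * ∑ v ∈ Finset.range (m + 1),
            (-1 : ℝ) ^ v *
                Real.exp (-(T / θ) * (gam n R (m - v + 1) - gam n R (m + 1))) /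
                ((∏ j ∈ Finset.Icc 1 v, (gam n R (m - v + 1) - gam n R (m - v + j + 1))) *
                  (∏ j ∈ Finset.Icc 1 (m - v), (gam n R j - gam n R (m - v + 1)))) *
              fG x (T * (gam n R (m - v + 1) - gam n R (m + 1)) / i) m (i / θ)) := by
  obtain ⟨k, rfl⟩ : ∃ k, m = k + 1 := ⟨m - 1, by omega⟩
  have hi0 : (0:ℝ) < i := by exact_mod_cast hi1
  have ha : ∀ s, 0 < (fun s => 1 + (R (s+1) : ℝ)) s := fun s => by positivity
  simp_rw [← final_eq n R θ T _ k i hθ hi1]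
  obtain ⟨hnn, hint⟩ := main_ind ha k T hT
  have hg : Measurable (fun z : Fin (k+1) → ℝ => (∑ h, z h * (1 + (R (h.1 + 1) : ℝ))) / i) := by
    fun_prop
  ext E hE
  rw [Measure.map_apply hg hE, withDensity_apply _ (hg hE), withDensity_apply _ hE,
    ← lintegral_indicator (hg hE), ← lintegral_indicator hE]
  have hmE : Measurable (E.indicator (1 : ℝ → ENNReal)) := measurable_one.indicator hE
  have hh : Measurable (fun w : ℝ => E.indicator (1 : ℝ → ENNReal) (w / i) *
      ENNReal.ofReal (Real.exp (-(1/θ) * w))) :=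
    (hmE.comp (by fun_prop)).mul (by fun_prop)
  refine (lintegral_congr fun z => ?_).trans ((hint _ hh).trans ?_)
  · by_cases hz : z ∈ sx (k+1) T
    · by_cases hz2 : (∑ h, z h * (1 + (R (h.1 + 1) : ℝ))) / i ∈ E
      · rw [Set.indicator_of_mem (by exact hz2), Set.indicator_of_mem (by exact hz),
          Set.indicator_of_mem hz, Set.indicator_of_mem hz2]
        simp
      · rw [Set.indicator_of_notMem (by exact hz2), Set.indicator_of_mem hz,
          Set.indicator_of_notMem hz2]
        simp
    · rw [Set.indicator_of_notMem (a := z) (s := sx (k+1) T) hz]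
      by_cases hz2 : (∑ h, z h * (1 + (R (h.1 + 1) : ℝ))) / i ∈ E
      · rw [Set.indicator_of_mem (by exact hz2), Set.indicator_of_notMem (by exact hz)]; simp
      · rw [Set.indicator_of_notMem (by exact hz2)]
  · rw [lint_scale i hi0 _ (by exact (((pd_meas _ k).comp
      (by fun_prop : Measurable fun w : ℝ => (T, w))).ennreal_ofReal).mul hh),
      ← lintegral_const_mul' _ _ ENNReal.ofReal_ne_top]
    refine lintegral_congr fun x => ?_
    rw [mul_div_cancel_left₀ x hi0.ne']
    by_cases hx : x ∈ E
    · rw [Set.indicator_of_mem hx, Set.indicator_of_mem hx, ENNReal.ofReal_mul hi0.le,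
        ENNReal.ofReal_mul (hnn _)]
      simp
    · simp [Set.indicator_of_notMem hx]
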